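/- (Strict improvement of one exact backward sweep at a non-stationary point; established in the proof of Theorem 2(2).) Let U : E → ℝ be differentiable at x = (x_0, …, x_{T−1}) with nonzero total derivative at x. Suppose y = (y_0, …, y_{T−1}) ∈ E is obtained from x by one backward sweep of exact block maximization: y_{T−1} is the unique maximizer of z ↦ U(x_0, …, x_{T−2}, z) over ℝ^{n_{T−1}}; for t = T−2, …, 1, y_t is the unique maximizer of z ↦ U(x_0, …, x_{t−1}, z, y_{t+1}, …, y_{T−1}) over ℝ^{n_t}; and y_0 is the unique maximizer of z ↦ U(z, y_1, …, y_{T−1}) over ℝ^{n_0} (all maximizers assumed to exist and to be unique). Then U(y) > U(x). -/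

import Mathlib

open Filter Topology

/-- Splice: coordinates `< k` from `a`, coordinates `≥ k` from `b`. -/
def splice {T : ℕ} {n : Fin T → ℕ}
    (a b : (t : Fin T) → EuclideanSpace ℝ (Fin (n t))) (k : ℕ) :
    (t : Fin T) → EuclideanSpace ℝ (Fin (n t)) :=
  fun t => if (t : ℕ) < k then a t else b t

/-- Strict improvement of one exact backward sweep at a non-stationary point:
if `U` is differentiable at `x` with nonzero derivative, and `y` is obtained from `x` by
one backward sweep of exact block maximization (for each block `t`, `y_t` is the unique
maximizer of `z ↦ U(x_0, …, x_{t-1}, z, y_{t+1}, …, y_{T-1})`, the generic point being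
`Function.update (splice x y (t+1)) t z` and the maximizing point `splice x y t`), then
`U(y) > U(x)`. -/
theorem emc_sweep_strict_improvement {T : ℕ} {n : Fin T → ℕ}
    (hT : 1 ≤ T) (hn : ∀ t, 1 ≤ n t)
    (U : ((t : Fin T) → EuclideanSpace ℝ (Fin (n t))) → ℝ)
    (x y : (t : Fin T) → EuclideanSpace ℝ (Fin (n t)))
    (hdiff : DifferentiableAt ℝ U x)
    (hne : fderiv ℝ U x ≠ 0)
    (hmax : ∀ (t : Fin T) (z : EuclideanSpace ℝ (Fin (n t))),
      U (Function.update (splice x y ((t : ℕ) + 1)) t z) ≤ U (splice x y (t : ℕ)))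
    (huniq : ∀ (t : Fin T) (z : EuclideanSpace ℝ (Fin (n t))), z ≠ y t →
      U (Function.update (splice x y ((t : ℕ) + 1)) t z) < U (splice x y (t : ℕ))) :
    U x < U y := by
  have hupd : ∀ t : Fin T,
      Function.update (splice x y ((t : ℕ) + 1)) t (x t) = splice x y ((t : ℕ) + 1) := by
    intro t
    rw [Function.update_eq_self_iff]
    simp [splice]
  have hanti : Antitone (fun k : ℕ => U (splice x y k)) := by
    apply antitone_nat_of_succ_le
    intro k
    by_cases hk : k < T
    · have h := hmax ⟨k, hk⟩ (x ⟨k, hk⟩)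
      rw [hupd] at h
      exact h
    · have h : splice x y (k + 1) = splice x y k := by
        funext t
        have ht := t.2
        have h1 : (t : ℕ) < k + 1 := by omega
        have h2 : (t : ℕ) < k := by omega
        simp [splice, h1, h2]
      show U (splice x y (k + 1)) ≤ U (splice x y k)
      rw [h]
  have hTx : splice x y T = x := by
    funext t
    simp [splice]
  have h0y : splice x y 0 = y := by
    funext t
    simp [splice]
  by_cases hxy : x = y
  · exfalso
    subst hxy
    have hs : ∀ k, splice x x k = x := by
      intro k
      funext t
      simp [splice]
    simp only [hs] at hmax
    apply hne
    have hpart : ∀ (t : Fin T) (v : EuclideanSpace ℝ (Fin (n t))),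
        fderiv ℝ U x (Pi.single t v) = 0 := by
      intro t v
      have hline : HasDerivAt (fun r : ℝ => x + r • (Pi.single t v :
          (t : Fin T) → EuclideanSpace ℝ (Fin (n t)))) (Pi.single t v) 0 := by
        simpa using ((hasDerivAt_id (0 : ℝ)).smul_const (Pi.single t v :
          (t : Fin T) → EuclideanSpace ℝ (Fin (n t)))).const_add x
      have hU : HasFDerivAt U (fderiv ℝ U x) (x + (0 : ℝ) • (Pi.single t v :
          (t : Fin T) → EuclideanSpace ℝ (Fin (n t)))) := by
        simpa using hdiff.hasFDerivAt
      have hc := hU.comp_hasDerivAt (0 : ℝ) hline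
      refine IsLocalMax.hasDerivAt_eq_zero (Filter.Eventually.of_forall ?_) hc
      intro r
      have he : x + r • (Pi.single t v : (t : Fin T) → EuclideanSpace ℝ (Fin (n t)))
          = Function.update x t (x t + r • v) := by
        funext s
        by_cases hst : s = t
        · subst hst
          simp
        · simp [hst]
      have h := hmax t (x t + r • v)
      rw [← he] at h
      simpa using h
    ext v
    have hv : v = ∑ t, (Pi.single t (v t) : (t : Fin T) → EuclideanSpace ℝ (Fin (n t))) :=
      (Finset.univ_sum_single v).symm
    rw [hv, map_sum]
    simp [hpart]
  · obtain ⟨t, ht⟩ := Function.ne_iff.mp hxy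
    have h1 := huniq t (x t) ht
    rw [hupd] at h1
    have h2 : U (splice x y T) ≤ U (splice x y ((t : ℕ) + 1)) := hanti t.2
    have h3 : U (splice x y (t : ℕ)) ≤ U (splice x y 0) := hanti (Nat.zero_le _)
    rw [hTx] at h2
    rw [h0y] at h3
    linarith
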